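/- For every prime l ≥ 3, the complex dimension of S₄(l)_+ equals (l−1)(l−3)/8. Moreover, every linear relation among the classes xy(u,v)_+ in S₄(l)_+ follows from the relations xy(u,v)_+ = −xy(−u,v)_+ = −xy(v,u)_+; that is, the kernel of the linear map from the free ℂ-vector space on symbols XY(u,v), (u,v) ∈ (ℤ/lℤ)² ∖ {(0,0)}, to S₄(l)_+ sending XY(u,v) to xy(u,v)_+ is spanned by the elements XY(u,v) + XY(−u,v) and XY(u,v) + XY(v,u). -/

import Mathlib

open scoped BigOperators

namespace MW

variable (l : ℕ)

/-- Index type for the basis symbols: `0 ↦ x²`, `1 ↦ xy`, `2 ↦ y²`. -/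
abbrev Sym := Fin 3 × ZMod l × ZMod l

/-- The free ℂ-vector space on the symbols. -/
abbrev V := Sym l →₀ ℂ

/-- `gcd(u,v,l) = 1`. -/
def copr (u v : ZMod l) : Prop := Nat.gcd (Nat.gcd (ZMod.val u) (ZMod.val v)) l = 1

instance (u v : ZMod l) : Decidable (copr l u v) := by unfold copr; infer_instance

noncomputable def X2 (u v : ZMod l) : V l := Finsupp.single (0, u, v) 1
noncomputable def XY (u v : ZMod l) : V l := Finsupp.single (1, u, v) 1
noncomputable def Y2 (u v : ZMod l) : V l := Finsupp.single (2, u, v) 1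

/-- The relation subspace: the relations of Merel–Shokurov on coprime symbols,
together with the (dummy) basis vectors at non-coprime indices. -/
noncomputable def Rel : Submodule ℂ (V l) :=
  Submodule.span ℂ
    ({ w | ∃ u v, ¬ copr l u v ∧ (w = X2 l u v ∨ w = XY l u v ∨ w = Y2 l u v) } ∪
     { w | ∃ u v, copr l u v ∧
        (w = X2 l u v + Y2 l v (-u) ∨
         w = XY l u v - XY l v (-u) ∨
         w = Y2 l u v + X2 l v (-u) ∨
         w = XY l v (-u - v) - XY l (-u - v) u + Y2 l (-u - v) u + X2 l u v - XY l u v) })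

/-- The space of weight four modular symbols of level `l`. -/
abbrev M := V l ⧸ Rel l

noncomputable def x2 (u v : ZMod l) : M l := Submodule.Quotient.mk (X2 l u v)
noncomputable def xy (u v : ZMod l) : M l := Submodule.Quotient.mk (XY l u v)
noncomputable def y2 (u v : ZMod l) : M l := Submodule.Quotient.mk (Y2 l u v)

/-- The class of `p₂·x²(u,v) + p₁·xy(u,v) + p₀·y²(u,v)` in `M l`. -/
noncomputable def pcl (p2 p1 p0 : ℂ) (u v : ZMod l) : M l :=
  p2 • x2 l u v + p1 • xy l u v + p0 • y2 l u v

/-- Reduction `ZMod l → ZMod (gcd(a,l))`. -/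
noncomputable def castg (a : ZMod l) : ZMod l →+* ZMod (Nat.gcd (ZMod.val a) l) :=
  ZMod.castHom (Nat.gcd_dvd_right (ZMod.val a) l) (ZMod (Nat.gcd (ZMod.val a) l))

/-- The functional on `V l` attached to the cusp data `(a, b)`. -/
noncomputable def psiV (a : ZMod l) (b : ZMod (Nat.gcd (ZMod.val a) l)) : V l →ₗ[ℂ] ℂ :=
  Finsupp.lift ℂ ℂ (Sym l) fun p =>
    if copr l p.2.1 p.2.2 then
      (if p.1 = 0 then
        ((if p.2.1 = a ∧ castg l a p.2.2 = b then (1 : ℂ) else 0) +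
         (if p.2.1 = -a ∧ castg l a p.2.2 = -b then (1 : ℂ) else 0))
       else if p.1 = 2 then
        (-(if p.2.2 = a ∧ castg l a p.2.1 = -b then (1 : ℂ) else 0) -
          (if p.2.2 = -a ∧ castg l a p.2.1 = b then (1 : ℂ) else 0))
       else 0)
    else 0

/-- The cuspidal subspace `S₄(l) ⊆ M₄(l)`: the (image in `M l` of the) intersection
of the kernels of all the functionals `ψ_{(a,b)}`. -/
noncomputable def S : Submodule ℂ (M l) :=
  Submodule.map (Rel l).mkQ
    (⨅ (a : ZMod l), ⨅ (b : ZMod (Nat.gcd (ZMod.val a) l)), ⨅ (_ : IsUnit b),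
      LinearMap.ker (psiV l a b))

/-- The linear map on `V l` underlying the involution `i`:
`x²(u,v) ↦ x²(-u,v)`, `xy(u,v) ↦ -xy(-u,v)`, `y²(u,v) ↦ y²(-u,v)`. -/
noncomputable def iV : V l →ₗ[ℂ] V l :=
  Finsupp.lift (V l) ℂ (Sym l) fun p =>
    if p.1 = 1 then -(Finsupp.single (1, -p.2.1, p.2.2) (1 : ℂ))
    else Finsupp.single (p.1, -p.2.1, p.2.2) (1 : ℂ)

end MW
namespace MW

section aux
variable {l : ℕ}

lemma copr_iff (hp : l.Prime) (u v : ZMod l) : copr l u v ↔ ¬ (u = 0 ∧ v = 0) := by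
  have : Fact l.Prime := ⟨hp⟩
  have : NeZero l := ⟨hp.ne_zero⟩
  unfold copr
  rw [← Nat.coprime_iff_gcd_eq_one, Nat.coprime_comm, Nat.Prime.coprime_iff_not_dvd hp, Nat.dvd_gcd_iff,
    ← ZMod.natCast_eq_zero_iff, ← ZMod.natCast_eq_zero_iff, ZMod.natCast_zmod_val, ZMod.natCast_zmod_val]

lemma mk_zero_of_mem {w : V l} (h : w ∈ Rel l) : (Submodule.Quotient.mk w : M l) = 0 :=
  (Submodule.Quotient.mk_eq_zero _).2 h

lemma sym_zero (hp : l.Prime) : x2 l 0 0 = 0 ∧ xy l 0 0 = 0 ∧ y2 l 0 0 = 0 := by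
  have h : ¬ copr l 0 0 := by rw [copr_iff hp]; simp
  refine ⟨mk_zero_of_mem ?_, mk_zero_of_mem ?_, mk_zero_of_mem ?_⟩ <;>
  exact Submodule.subset_span (Or.inl ⟨0, 0, h, by simp⟩)

lemma rel_a (hp : l.Prime) (u v : ZMod l) : x2 l u v + y2 l v (-u) = 0 := by
  by_cases h : copr l u v
  · exact mk_zero_of_mem (Submodule.subset_span (Or.inr ⟨u, v, h, Or.inl rfl⟩))
  · rw [copr_iff hp, not_not] at h
    obtain ⟨rfl, rfl⟩ := h
    simp [sym_zero hp]

lemma rel_b (hp : l.Prime) (u v : ZMod l) : xy l u v = xy l v (-u) := by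
  by_cases h : copr l u v
  · exact sub_eq_zero.1
      (mk_zero_of_mem (Submodule.subset_span (Or.inr ⟨u, v, h, Or.inr (Or.inl rfl)⟩)))
  · rw [copr_iff hp, not_not] at h
    obtain ⟨rfl, rfl⟩ := h
    simp

lemma rel_c (hp : l.Prime) (u v : ZMod l) : y2 l u v = - x2 l v (-u) := by
  by_cases h : copr l u v
  · exact eq_neg_of_add_eq_zero_left
      (mk_zero_of_mem (Submodule.subset_span (Or.inr ⟨u, v, h, Or.inr (Or.inr (Or.inl rfl))⟩)))
  · rw [copr_iff hp, not_not] at h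
    obtain ⟨rfl, rfl⟩ := h
    simp [sym_zero hp]

lemma rel_d (hp : l.Prime) (u v : ZMod l) :
    xy l v (-u - v) - xy l (-u - v) u + y2 l (-u - v) u + x2 l u v - xy l u v = 0 := by
  by_cases h : copr l u v
  · exact (mk_zero_of_mem (Submodule.subset_span (Or.inr ⟨u, v, h, Or.inr (Or.inr (Or.inr rfl))⟩)))
  · rw [copr_iff hp, not_not] at h
    obtain ⟨rfl, rfl⟩ := h
    simp [sym_zero hp]

lemma x2_neg (hp : l.Prime) (u v : ZMod l) : x2 l (-u) (-v) = x2 l u v := by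
  have h1 := rel_a hp u v
  rw [rel_c hp v (-u)] at h1
  rw [← sub_eq_add_neg, sub_eq_zero] at h1
  exact h1.symm

lemma xy_swap (hp : l.Prime) (u v : ZMod l) : xy l (-u) v = xy l v u := by
  rw [rel_b hp (-u) v, neg_neg]

lemma x2_step (hp : l.Prime) (u v : ZMod l) :
    x2 l u v - x2 l u (u + v) = xy l u v + xy l u (u + v) - xy l (u + v) v := by
  have h1 := rel_d hp u v
  have h2 : -u - v = -(u + v) := by ring
  rw [rel_c hp, h2, neg_neg, xy_swap hp, ← rel_b hp] at h1
  rw [← sub_eq_zero, ← h1]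
  abel

/-- partial sums -/
noncomputable def tele {Q : Type*} [AddCommGroup Q] (f : ZMod l → Q) (k : ZMod l) : Q :=
  - ∑ j ∈ Finset.range k.val, f (j : ZMod l)

lemma sum_range_zmod [NeZero l] {Q : Type*} [AddCommGroup Q] (f : ZMod l → Q) :
    ∑ j ∈ Finset.range l, f (j : ZMod l) = ∑ k, f k := by
  refine Finset.sum_nbij' (fun j => (j : ZMod l)) (fun k => k.val) ?_ ?_ ?_ ?_ ?_
  · simp
  · intro k _; simpa using ZMod.val_lt k
  · intro j hj; exact ZMod.val_cast_of_lt (by simpa using hj)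
  · intro k _; simp
  · simp

lemma tele_step [Fact (1 < l)] {Q : Type*} [AddCommGroup Q] (f : ZMod l → Q) (hf : ∑ k, f k = 0)
    (k : ZMod l) : tele f (k + 1) = tele f k - f k := by
  unfold tele
  have hk := ZMod.val_lt k
  by_cases h : k.val + 1 < l
  · have hv : (k + 1).val = k.val + 1 := by
      rw [ZMod.val_add_of_lt] <;> rw [ZMod.val_one]
      exact h
    rw [hv, Finset.sum_range_succ, ZMod.natCast_zmod_val]
    abel
  · have h' : k.val + 1 = l := by omega
    have hk1 : k + 1 = 0 := by
      have : ((k.val + 1 : ℕ) : ZMod l) = 0 := by rw [h']; simp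
      simpa using this
    rw [hk1, ← sub_eq_zero]
    have := sum_range_zmod f
    have hr : Finset.range l = Finset.range (k.val + 1) := by rw [h']
    rw [hf, hr, Finset.sum_range_succ, ZMod.natCast_zmod_val] at this
    simp only [ZMod.val_zero, Finset.range_zero, Finset.sum_empty]
    simpa [add_comm] using this

/-- The constructed values on `x²` symbols, out of an odd antisymmetric `br`. -/
noncomputable def gg {Q : Type*} [AddCommGroup Q] (br : ZMod l → ZMod l → Q) (u v : ZMod l) : Q :=
  if u = 0 then 0 else
    tele (fun k => br u (k * u) + br u (u + k * u) - br (u + k * u) (k * u)) (v * u⁻¹)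

section gg
variable {Q : Type*} [AddCommGroup Q] [Module ℂ Q] (br : ZMod l → ZMod l → Q)

lemma br_neg (h1 : ∀ u v, br (-u) v = - br u v) (h2 : ∀ u v, br v u = - br u v)
    (u v : ZMod l) : br u (-v) = - br u v := by
  rw [h2 (-v) u, h1, h2 u v]; simp

lemma gg_neg (h1 : ∀ u v, br (-u) v = - br u v) (h2 : ∀ u v, br v u = - br u v)
    (u v : ZMod l) (hp : l.Prime) : gg br (-u) (-v) = gg br u v := by
  have : Fact l.Prime := ⟨hp⟩
  unfold gg
  have h : ∀ k : ZMod l, -u + -(k * u) = -(u + k * u) := by intro k; ring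
  by_cases hu : u = 0
  · simp [hu]
  · have : -v * (-u)⁻¹ = v * u⁻¹ := by rw [inv_neg]; ring
    simp only [neg_eq_zero, hu, if_false, this, mul_neg, h, h1, br_neg br h1 h2, neg_neg]

lemma eq_zero_of_neg {x : Q} (h : x = -x) : x = 0 := by
  have : (2 : ℂ) • x = 0 := by
    rw [two_smul]; nth_rewrite 1 [h]; simp
  simpa using this

lemma gg_step (h1 : ∀ u v, br (-u) v = - br u v) (h2 : ∀ u v, br v u = - br u v)
    (u v : ZMod l) (hp : l.Prime) :
    gg br u v - gg br u (u + v) = br u v + br u (u + v) - br (u + v) v := by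
  have : Fact l.Prime := ⟨hp⟩
  have : Fact (1 < l) := ⟨hp.one_lt⟩
  by_cases hu : u = 0
  · subst hu
    have a1 : br 0 v = 0 := eq_zero_of_neg (by simpa using h1 0 v)
    have a2 : br v v = 0 := eq_zero_of_neg (h2 v v)
    simp [gg, a1, a2]
  · unfold gg
    simp only [hu, if_false]
    have e : (u + v) * u⁻¹ = v * u⁻¹ + 1 := by field_simp; ring
    have s1 : ∑ k : ZMod l, br u (k * u) = 0 := by
      apply eq_zero_of_neg
      rw [← Finset.sum_neg_distrib]
      refine Fintype.sum_equiv (Equiv.neg _) _ _ fun k => ?_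
      simp [br_neg br h1 h2]
    have s2 : ∑ k : ZMod l, br u (u + k * u) = 0 := by
      rw [← s1]
      refine Fintype.sum_equiv (Equiv.addRight 1) _ _ fun k => ?_
      simp only [Equiv.coe_addRight]
      congr 1; ring
    have s3 : ∑ k : ZMod l, br (u + k * u) (k * u) = 0 := by
      apply eq_zero_of_neg
      rw [← Finset.sum_neg_distrib]
      refine Fintype.sum_equiv (Equiv.subLeft (-1)) _ _ fun k => ?_
      simp only [Equiv.subLeft_apply]
      have q1 : u + (-1 - k) * u = -(k * u) := by ring
      have q2 : (-1 - k) * u = - (u + k * u) := by ring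
      rw [q1, q2, h1, br_neg br h1 h2, neg_neg, h2]
    rw [e, tele_step]
    · have : v * u⁻¹ * u = v := by field_simp
      rw [this]; abel
    · rw [Finset.sum_sub_distrib, Finset.sum_add_distrib, s1, s2, s3]; simp

/-- The functional on `V`. -/
noncomputable def GV (br : ZMod l → ZMod l → Q) : V l →ₗ[ℂ] Q :=
  Finsupp.lift Q ℂ (Sym l) fun p =>
    if p.1 = 1 then br p.2.1 p.2.2 else if p.1 = 0 then gg br p.2.1 p.2.2
      else - gg br p.2.2 (-p.2.1)

lemma GV_X2 (u v : ZMod l) : GV br (X2 l u v) = gg br u v := by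
  simp [GV, X2, Finsupp.lift_apply]

lemma GV_XY (u v : ZMod l) : GV br (XY l u v) = br u v := by
  simp [GV, XY, Finsupp.lift_apply]

lemma GV_Y2 (u v : ZMod l) : GV br (Y2 l u v) = - gg br v (-u) := by
  simp [GV, Y2, Finsupp.lift_apply]

lemma Rel_le_ker (h1 : ∀ u v, br (-u) v = - br u v) (h2 : ∀ u v, br v u = - br u v)
    (hp : l.Prime) : Rel l ≤ LinearMap.ker (GV br) := by
  have z : br 0 0 = 0 := eq_zero_of_neg (h2 0 0)
  have zg : gg br 0 0 = 0 := by simp [gg]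
  refine Submodule.span_le.2 ?_
  rintro w (⟨u, v, huv, h⟩ | ⟨u, v, huv, h⟩)
  · rw [copr_iff hp, not_not] at huv
    obtain ⟨rfl, rfl⟩ := huv
    rcases h with rfl | rfl | rfl <;>
    simp [GV_X2, GV_XY, GV_Y2, z, zg]
  · rcases h with rfl | rfl | rfl | rfl <;> simp only [SetLike.mem_coe, LinearMap.mem_ker, map_add, map_sub, GV_X2, GV_XY, GV_Y2]
    · rw [gg_neg br h1 h2 _ _ hp]; simp
    · rw [br_neg br h1 h2, h2 u v]; simp
    · simp
    · have h := gg_step br h1 h2 u v hp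
      have e : -u - v = -(u + v) := by ring
      rw [e, br_neg br h1 h2, h1, neg_neg, h2 u (u + v), h2 (u + v) v, neg_neg, neg_neg]
      rw [← sub_eq_zero] at h
      rw [← h]; abel

end gg


/-- Index type of the nonzero pairs. -/
abbrev Pr (l : ℕ) := {p : ZMod l × ZMod l // p ≠ 0}

/-- The span of the obvious relations. -/
noncomputable def K (l : ℕ) : Submodule ℂ (Pr l →₀ ℂ) :=
  Submodule.span ℂ
          {w : {p : ZMod l × ZMod l // p ≠ 0} →₀ ℂ |
            ∃ p q : {p : ZMod l × ZMod l // p ≠ 0},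
              (q.1 = (-p.1.1, p.1.2) ∨ q.1 = (p.1.2, p.1.1)) ∧
              w = Finsupp.single p 1 + Finsupp.single q 1}

/-- The universal odd antisymmetric bracket. -/
noncomputable def br (u v : ZMod l) : (Pr l →₀ ℂ) ⧸ K l :=
  if h : (u, v) ≠ 0 then Submodule.Quotient.mk (Finsupp.single (⟨(u, v), h⟩ : Pr l) (1 : ℂ)) else 0

lemma br_h1 (u v : ZMod l) : br (-u) v = - br u v := by
  unfold br
  by_cases h : (u, v) ≠ 0
  · have h' : (-u, v) ≠ 0 := by simpa using h
    rw [dif_pos h, dif_pos h']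
    refine eq_neg_of_add_eq_zero_right ((Submodule.Quotient.mk_eq_zero _).2
      (Submodule.subset_span ⟨⟨(u, v), h⟩, ⟨(-u, v), h'⟩, Or.inl rfl, rfl⟩))
  · have h' : ¬ (-u, v) ≠ 0 := by simpa using h
    rw [dif_neg h, dif_neg h']; simp

lemma br_h2 (u v : ZMod l) : br v u = - br u v := by
  unfold br
  by_cases h : (u, v) ≠ 0
  · have h' : (v, u) ≠ 0 := by
      intro h2; apply h; simp at h2 ⊢; tauto
    rw [dif_pos h, dif_pos h']
    refine eq_neg_of_add_eq_zero_right ((Submodule.Quotient.mk_eq_zero _).2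
      (Submodule.subset_span ⟨⟨(u, v), h⟩, ⟨(v, u), h'⟩, Or.inr rfl, rfl⟩))
  · have h' : ¬ (v, u) ≠ 0 := by
      simp at h ⊢; tauto
    rw [dif_neg h, dif_neg h']; simp

/-- `i` -/
noncomputable abbrev ii (hi : Rel l ≤ (Rel l).comap (iV l)) : M l →ₗ[ℂ] M l :=
  Submodule.mapQ (Rel l) (Rel l) (iV l) hi

/-- projection to the plus part -/
noncomputable def pp (hi : Rel l ≤ (Rel l).comap (iV l)) : M l →ₗ[ℂ] M l :=
  (2 : ℂ)⁻¹ • (LinearMap.id + ii hi)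

lemma ii_x2 (hi : Rel l ≤ (Rel l).comap (iV l)) (u v : ZMod l) : ii hi (x2 l u v) = x2 l (-u) v := by
  unfold ii x2
  rw [Submodule.mapQ_apply]; simp [iV, X2]

lemma ii_xy (hi : Rel l ≤ (Rel l).comap (iV l)) (u v : ZMod l) : ii hi (xy l u v) = - xy l (-u) v := by
  unfold ii xy
  rw [Submodule.mapQ_apply]; simp [iV, XY]

lemma ii_ii (hi : Rel l ≤ (Rel l).comap (iV l)) (m : M l) : ii hi (ii hi m) = m := by
  induction m using Submodule.Quotient.induction_on with
  | H w =>
    unfold ii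
    rw [Submodule.mapQ_apply, Submodule.mapQ_apply]
    congr 1
    induction w using Finsupp.induction_linear with
    | zero => simp
    | add f g hf hg => simp [hf, hg]
    | single p c =>
      obtain ⟨a, u, v⟩ := p
      have h1 : ∀ u v : ZMod l, ∀ c : ℂ, iV l (Finsupp.single (1, u, v) c) =
          - Finsupp.single (1, -u, v) c := by
        intro u v c; simp [iV]
      by_cases h : a = 1
      · rw [h, h1, map_neg, h1]; simp
      · simp [iV, h]

/-- plus part of `xy` -/
noncomputable def ee (hi : Rel l ≤ (Rel l).comap (iV l)) (u v : ZMod l) : M l := pp hi (xy l u v)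

lemma ee_h1 (hi : Rel l ≤ (Rel l).comap (iV l)) (u v : ZMod l) : ee hi (-u) v = - ee hi u v := by
  simp only [ee, pp, LinearMap.smul_apply, LinearMap.add_apply, LinearMap.id_apply, ii_xy, neg_neg]
  rw [← smul_neg]; congr 1; abel

lemma ee_h2 (hp : l.Prime) (hi : Rel l ≤ (Rel l).comap (iV l)) (u v : ZMod l) :
    ee hi v u = - ee hi u v := by
  simp only [ee, pp, LinearMap.smul_apply, LinearMap.add_apply, LinearMap.id_apply, ii_xy]
  rw [← smul_neg, xy_swap hp, xy_swap hp]; congr 1; abel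

/-- The map of the statement -/
noncomputable abbrev FF (hi : Rel l ≤ (Rel l).comap (iV l)) : (Pr l →₀ ℂ) →ₗ[ℂ] M l :=
  (Finsupp.lift (M l) ℂ {p : ZMod l × ZMod l // p ≠ 0}) fun p =>
          (2 : ℂ)⁻¹ • (xy l p.1.1 p.1.2 +
            Submodule.mapQ (Rel l) (Rel l) (iV l) hi (xy l p.1.1 p.1.2))

lemma FF_single (hi : Rel l ≤ (Rel l).comap (iV l)) (p : Pr l) (c : ℂ) :
    FF hi (Finsupp.single p c) = c • ee hi p.1.1 p.1.2 := by
  simp [ee, pp, ii]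

lemma ker_FF (hp : l.Prime) (hi : Rel l ≤ (Rel l).comap (iV l)) : LinearMap.ker (FF hi) = K l := by
  apply le_antisymm
  · intro w hw
    let G : M l →ₗ[ℂ] ((Pr l →₀ ℂ) ⧸ K l) := (Rel l).liftQ (GV br) (Rel_le_ker br br_h1 br_h2 hp)
    have key : G ∘ₗ FF hi = (K l).mkQ := by
      apply Finsupp.lhom_ext
      rintro ⟨⟨u, v⟩, h⟩ c
      rw [LinearMap.comp_apply, FF_single]
      simp only [ee, pp, LinearMap.smul_apply, LinearMap.add_apply, LinearMap.id_apply, ii_xy]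
      have hG : ∀ u v, G (xy l u v) = br u v := by
        intro u v
        simp only [G, xy, Submodule.liftQ_apply, GV_XY]
      rw [map_smul, map_smul, map_add, map_neg, hG, hG, br_h1, neg_neg, ← two_smul ℂ (br u v), smul_smul]
      have h2 : br u v = (K l).mkQ (Finsupp.single (⟨(u, v), h⟩ : Pr l) (1 : ℂ)) := by
        unfold br; rw [dif_pos h]; rfl
      rw [h2, ← map_smul, ← map_smul]
      congr 1; simp
    rw [← Submodule.ker_mkQ (K l), ← key, LinearMap.mem_ker, LinearMap.comp_apply, LinearMap.mem_ker.1 hw,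
      map_zero]
  · refine Submodule.span_le.2 ?_
    rintro w ⟨p, q, h, rfl⟩
    rw [SetLike.mem_coe, LinearMap.mem_ker, map_add, FF_single, FF_single, one_smul, one_smul]
    rcases h with h | h <;> rw [h]
    · simp [ee_h1]
    · rw [ee_h2 hp]; simp

/-! The span of the `xy₊`. -/

lemma ee_zero (hp : l.Prime) (hi : Rel l ≤ (Rel l).comap (iV l)) : ee hi 0 0 = 0 := by
  simp [ee, sym_zero hp]

lemma ee_mem (hp : l.Prime) (hi : Rel l ≤ (Rel l).comap (iV l)) (u v : ZMod l) :
    ee hi u v ∈ LinearMap.range (FF hi) := by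
  by_cases h : (u, v) = 0
  · simp at h
    rw [h.1, h.2, ee_zero hp]; exact zero_mem _
  · exact ⟨Finsupp.single ⟨(u, v), h⟩ 1, by rw [FF_single]; simp⟩

lemma px_step (hp : l.Prime) (hi : Rel l ≤ (Rel l).comap (iV l)) (u : ZMod l) (k : ℕ) :
    pp hi (x2 l u (k * u)) - pp hi (x2 l u 0) ∈ LinearMap.range (FF hi) := by
  induction k with
  | zero => simp
  | succ k ih =>
    have h := congrArg (pp hi) (x2_step hp u (k * u))
    simp only [map_sub, map_add] at h
    have e : u + (k : ZMod l) * u = ((k + 1 : ℕ) : ZMod l) * u := by push_cast; ring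
    have h3 : pp hi (x2 l u (k * u)) - pp hi (x2 l u (u + k * u)) ∈ LinearMap.range (FF hi) := by
      rw [h]
      exact sub_mem (add_mem (ee_mem hp hi _ _) (ee_mem hp hi _ _)) (ee_mem hp hi _ _)
    rw [e] at h3
    have := sub_mem ih h3
    convert this using 1; abel

lemma px_mem (hp : l.Prime) (hi : Rel l ≤ (Rel l).comap (iV l)) (u v : ZMod l) (hu : u ≠ 0) :
    pp hi (x2 l u v) - pp hi (x2 l u 0) ∈ LinearMap.range (FF hi) := by
  have : Fact l.Prime := ⟨hp⟩
  have h := px_step hp hi u (v * u⁻¹).val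
  rw [ZMod.natCast_zmod_val] at h
  have e : v * u⁻¹ * u = v := by field_simp
  rwa [e] at h

lemma psi_X2 (hp : l.Prime) (a b u v : ZMod l) (h : ¬ (u = 0 ∧ v = 0)) :
    psiV l a (castg l a b) (X2 l u v) =
      (if u = a ∧ castg l a v = castg l a b then (1 : ℂ) else 0) +
         (if u = -a ∧ castg l a v = -castg l a b then (1 : ℂ) else 0) := by
  have hc := (copr_iff hp u v).2 h
  simp [psiV, X2, hc]

lemma psi_Y2 (hp : l.Prime) (a b u v : ZMod l) :
    psiV l a (castg l a b) (Y2 l u v) = - psiV l a (castg l a b) (X2 l v (-u)) := by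
  by_cases h : u = 0 ∧ v = 0
  · have hc : ¬ copr l 0 0 := by rw [copr_iff hp]; simp
    obtain ⟨rfl, rfl⟩ := h
    simp [psiV, Y2, X2, hc]
  · have hc := (copr_iff hp u v).2 h
    rw [psi_X2 hp _ _ _ _ (by simpa [and_comm] using h)]
    simp [psiV, Y2, hc, neg_eq_iff_eq_neg, sub_eq_add_neg, add_comm]

lemma psi_XY (a b u v : ZMod l) :
    psiV l a (castg l a b) (XY l u v) = 0 := by
  simp [psiV, XY]

lemma psi_a (hp : l.Prime) (a u v : ZMod l) (ha : a ≠ 0) (h : ¬ (u = 0 ∧ v = 0)) :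
    psiV l a (castg l a 1) (X2 l u v) =
      (if u = a then (1 : ℂ) else 0) + (if u = -a then (1 : ℂ) else 0) := by
  have : Fact l.Prime := ⟨hp⟩
  have hg : Nat.gcd (ZMod.val a) l = 1 := by
    have := (copr_iff hp a a).2 (by simp [ha])
    simpa [copr] using this
  have hs : Subsingleton (ZMod (Nat.gcd (ZMod.val a) l)) := by
    rw [hg]; infer_instance
  rw [psi_X2 hp _ _ _ _ h]
  simp [hs.elim (castg l a v) 1, hs.elim (-1) 1]

lemma psi_b (hp : l.Prime) (b u v : ZMod l) (h : ¬ (u = 0 ∧ v = 0)) :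
    psiV l 0 (castg l 0 b) (X2 l u v) =
      (if u = 0 ∧ v = b then (1 : ℂ) else 0) + (if u = 0 ∧ v = -b then (1 : ℂ) else 0) := by
  have : Fact l.Prime := ⟨hp⟩
  have hg : Nat.gcd (ZMod.val (0 : ZMod l)) l = l := by simp
  have hs : Nontrivial (ZMod (Nat.gcd (ZMod.val (0 : ZMod l)) l)) := by
    rw [hg]; infer_instance
  have hinj : Function.Injective (castg l 0) := (castg l 0).injective
  rw [psi_X2 hp _ _ _ _ h]
  simp only [← map_neg, hinj.eq_iff, neg_zero]

lemma pp_x2_neg (hp : l.Prime) (hi : Rel l ≤ (Rel l).comap (iV l)) (u v : ZMod l) :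
    pp hi (x2 l (-u) (-v)) = pp hi (x2 l u v) := by rw [x2_neg hp]

/-- Every class is a combination of `x²(a,0)`, `x²(0,b)` with coefficients given by `ψ`,
up to the span of the `xy₊`. -/
noncomputable def DD [NeZero l] (hi : Rel l ≤ (Rel l).comap (iV l)) : V l →ₗ[ℂ] M l :=
  pp hi ∘ₗ (Rel l).mkQ
    - (2 : ℂ)⁻¹ • ∑ a ∈ Finset.univ.filter (fun a : ZMod l => a ≠ 0),
        (psiV l a (castg l a 1)).smulRight (pp hi (x2 l a 0))
    - (2 : ℂ)⁻¹ • ∑ b ∈ Finset.univ.filter (fun b : ZMod l => b ≠ 0),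
        (psiV l 0 (castg l 0 b)).smulRight (pp hi (x2 l 0 b))

lemma DD_apply [NeZero l] (hi : Rel l ≤ (Rel l).comap (iV l)) (w : V l) :
    DD hi w = pp hi (Submodule.Quotient.mk w)
    - (2 : ℂ)⁻¹ • ∑ a ∈ Finset.univ.filter (fun a : ZMod l => a ≠ 0),
        (psiV l a (castg l a 1) w) • (pp hi (x2 l a 0))
    - (2 : ℂ)⁻¹ • ∑ b ∈ Finset.univ.filter (fun b : ZMod l => b ≠ 0),
        (psiV l 0 (castg l 0 b) w) • (pp hi (x2 l 0 b)) := by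
  simp [DD, LinearMap.sum_apply]

lemma DD_X2 [NeZero l] (hp : l.Prime) (hi : Rel l ≤ (Rel l).comap (iV l)) (u v : ZMod l) :
    DD hi (X2 l u v) ∈ LinearMap.range (FF hi) := by
  have half : ∀ m : M l, (2 : ℂ)⁻¹ • (m + m) = m := by
    intro m; rw [← two_smul ℂ m, smul_smul]; simp
  have hneg0 : ∀ u : ZMod l, pp hi (x2 l (-u) 0) = pp hi (x2 l u 0) := by
    intro u; simpa using pp_x2_neg hp hi u 0
  have h0neg : ∀ u : ZMod l, pp hi (x2 l 0 (-u)) = pp hi (x2 l 0 u) := by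
    intro u; simpa using pp_x2_neg hp hi 0 u
  by_cases h : u = 0 ∧ v = 0
  · have hc : ¬ copr l 0 0 := by rw [copr_iff hp]; simp
    obtain ⟨rfl, rfl⟩ := h
    have h1 : ∀ a b, psiV l a b (X2 l 0 0) = 0 := by
      intro a b; simp [psiV, X2, hc]
    have h2 : (Submodule.Quotient.mk (X2 l 0 0) : M l) = 0 := (sym_zero hp).1
    rw [DD_apply]
    simp [h1, h2]
  · rw [DD_apply]
    have hA : ∑ a ∈ Finset.univ.filter (fun a : ZMod l => a ≠ 0),
        (psiV l a (castg l a 1) (X2 l u v)) • (pp hi (x2 l a 0)) =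
        if u = 0 then 0 else pp hi (x2 l u 0) + pp hi (x2 l u 0) := by
      rw [Finset.sum_congr rfl (g := fun a => (if u = a then pp hi (x2 l a 0) else 0) +
          (if a = -u then pp hi (x2 l a 0) else 0))]
      · rw [Finset.sum_add_distrib, Finset.sum_ite_eq, Finset.sum_ite_eq']
        by_cases hu : u = 0 <;> simp [hu, hneg0]
      · intro a ha
        rw [psi_a hp _ _ _ (by simpa using ha) h, add_smul]
        simp [ite_smul, eq_neg_iff_add_eq_zero, add_comm]
    have hB : ∑ b ∈ Finset.univ.filter (fun b : ZMod l => b ≠ 0),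
        (psiV l 0 (castg l 0 b) (X2 l u v)) • (pp hi (x2 l 0 b)) =
        if u = 0 then pp hi (x2 l u v) + pp hi (x2 l u v) else 0 := by
      rw [Finset.sum_congr rfl (g := fun b => if u = 0 then ((if v = b then pp hi (x2 l 0 b) else 0) +
          (if b = -v then pp hi (x2 l 0 b) else 0)) else 0)]
      · by_cases hu : u = 0
        · have hv : v ≠ 0 := fun hv => h ⟨hu, hv⟩
          simp only [hu, if_true]
          rw [Finset.sum_add_distrib, Finset.sum_ite_eq, Finset.sum_ite_eq']
          simp [hv, h0neg]
        · simp [hu]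
      · intro b hb
        rw [psi_b hp _ _ _ h, add_smul]
        by_cases hu : u = 0 <;>
        simp [hu, ite_smul, eq_neg_iff_add_eq_zero, add_comm]
    rw [hA, hB]
    by_cases hu : u = 0
    · simp only [hu, if_true, half, smul_zero, sub_zero]
      have : pp hi (Submodule.Quotient.mk (X2 l 0 v)) = pp hi (x2 l 0 v) := rfl
      rw [this, sub_self]; exact zero_mem _
    · simp only [hu, if_false, half, smul_zero, sub_zero]
      exact px_mem hp hi u v hu

lemma DD_mem [NeZero l] (hp : l.Prime) (hi : Rel l ≤ (Rel l).comap (iV l)) (w : V l) :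
    DD hi w ∈ LinearMap.range (FF hi) := by
  induction w using Finsupp.induction_linear with
  | zero => simp
  | add f g hf hg => rw [map_add]; exact add_mem hf hg
  | single p c =>
    obtain ⟨a, u, v⟩ := p
    have : (Finsupp.single (a, u, v) c : V l) = c • Finsupp.single (a, u, v) 1 := by simp
    rw [this, map_smul]
    refine Submodule.smul_mem _ _ ?_
    fin_cases a
    · exact DD_X2 hp hi u v
    · change DD hi (XY l u v) ∈ _
      rw [DD_apply]
      simp only [psi_XY, zero_smul, Finset.sum_const_zero, smul_zero, sub_zero]
      exact ee_mem hp hi u v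
    · change DD hi (Y2 l u v) ∈ _
      have : DD hi (Y2 l u v) = - DD hi (X2 l v (-u)) := by
        have h : (Submodule.Quotient.mk (Y2 l u v) : M l) = - Submodule.Quotient.mk (X2 l v (-u)) :=
          rel_c hp u v
        rw [DD_apply, DD_apply, h]
        simp only [psi_Y2 hp, neg_smul, Finset.sum_neg_distrib, smul_neg, map_neg]
        abel
      rw [this]
      exact neg_mem (DD_X2 hp hi _ _)

lemma S_plus (hp : l.Prime) (hi : Rel l ≤ (Rel l).comap (iV l)) :
    S l ⊓ LinearMap.ker
            (Submodule.mapQ (Rel l) (Rel l) (iV l) hi - (LinearMap.id : M l →ₗ[ℂ] M l))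
    = LinearMap.range (FF hi) := by
  have : Fact l.Prime := ⟨hp⟩
  have : NeZero l := ⟨hp.ne_zero⟩
  apply le_antisymm
  · rintro m ⟨⟨w, hw, rfl⟩, hm⟩
    have hm' : ii hi ((Rel l).mkQ w) = (Rel l).mkQ w := sub_eq_zero.1 hm
    have hpp : pp hi ((Rel l).mkQ w) = (Rel l).mkQ w := by
      simp only [pp, LinearMap.smul_apply, LinearMap.add_apply, LinearMap.id_apply, hm']
      rw [← two_smul ℂ ((Rel l).mkQ w), smul_smul]; simp
    have hD := DD_mem hp hi w
    simp only [SetLike.mem_coe, Submodule.mem_iInf, LinearMap.mem_ker] at hw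
    rw [DD_apply, Finset.sum_eq_zero, Finset.sum_eq_zero] at hD
    · simp only [smul_zero, sub_zero] at hD
      rw [← hpp]; exact hD
    · intro b hb
      have hb' : b ≠ 0 := by simpa using hb
      rw [hw 0 _ ((IsUnit.mk0 b hb').map (castg l 0)), zero_smul]
    · intro a ha
      rw [hw a _ (isUnit_one.map (castg l a)), zero_smul]
  · rintro _ ⟨w, rfl⟩
    induction w using Finsupp.induction_linear with
    | zero => rw [map_zero]; exact zero_mem _
    | add f g hf hg => rw [map_add]; exact add_mem hf hg
    | single p c =>
      rw [FF_single]
      refine Submodule.smul_mem _ _ ⟨?_, ?_⟩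
      · refine ⟨(2 : ℂ)⁻¹ • (XY l p.1.1 p.1.2 - XY l (-p.1.1) p.1.2), ?_, ?_⟩
        · simp only [SetLike.mem_coe, Submodule.mem_iInf, LinearMap.mem_ker]
          intro a b _
          have h1 : ∀ u v, psiV l a b (XY l u v) = 0 := by
            intro u v; simp [psiV, XY]
          rw [map_smul, map_sub, h1, h1]; simp
        · simp only [ee, pp, LinearMap.smul_apply, LinearMap.add_apply, LinearMap.id_apply, ii_xy]
          rw [map_smul, map_sub, sub_eq_add_neg]; rfl
      · change ii hi (ee hi _ _) - ee hi _ _ = 0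
        simp only [ee, pp, LinearMap.smul_apply, LinearMap.add_apply, LinearMap.id_apply, map_smul,
          map_add, ii_ii]
        rw [add_comm, sub_self]

/-! Dimension count. -/

/-- Index set of the basis: pairs `i < j < n`. -/
abbrev RR (n : ℕ) := Σ j : Fin n, Fin j.val

lemma card_RR (n : ℕ) : Fintype.card (RR n) = n * (n - 1) / 2 := by
  rw [Fintype.card_sigma]
  simp only [Fintype.card_fin]
  rw [Fin.sum_univ_eq_sum_range (fun i => i), Finset.sum_range_id]

lemma cast_inj {n i j : ℕ} (hl : l = 2 * n + 1) (hi : i < n) (hj : j < n)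
    (h : ((i : ZMod l) + 1) = j + 1) : i = j := by
  have h' : ((i : ℕ) : ZMod l) = (j : ℕ) := by simpa using h
  rw [ZMod.natCast_eq_natCast_iff'] at h'
  rwa [Nat.mod_eq_of_lt (by omega), Nat.mod_eq_of_lt (by omega)] at h'

lemma cast_ne_neg {n i j : ℕ} (hl : l = 2 * n + 1) (hi : i < n) (hj : j < n) :
    ((i : ZMod l) + 1) ≠ -(j + 1) := by
  intro h
  have h' : ((i + 1 + (j + 1) : ℕ) : ZMod l) = 0 := by
    push_cast; rw [h]; ring
  rw [ZMod.natCast_eq_zero_iff] at h'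
  have := Nat.le_of_dvd (by omega) h'
  omega

lemma cover {n : ℕ} (hl : l = 2 * n + 1) (u : ZMod l) :
    u = 0 ∨ ∃ i < n, u = (i : ZMod l) + 1 ∨ u = -((i : ZMod l) + 1) := by
  have : NeZero l := ⟨by omega⟩
  have hv := ZMod.val_lt u
  by_cases h0 : u.val = 0
  · left; simpa using h0
  right
  by_cases h : u.val ≤ n
  · refine ⟨u.val - 1, by omega, Or.inl ?_⟩
    have : ((u.val - 1 + 1 : ℕ) : ZMod l) = u := by
      rw [Nat.sub_add_cancel (by omega)]; simp
    rw [Nat.cast_add, Nat.cast_one] at this; exact this.symm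
  · refine ⟨l - u.val - 1, by omega, Or.inr ?_⟩
    rw [eq_neg_iff_add_eq_zero]
    have : ((u.val + (l - u.val - 1 + 1) : ℕ) : ZMod l) = 0 := by
      rw [show u.val + (l - u.val - 1 + 1) = l by omega]; simp
    simpa using this

/-- odd delta functions -/
noncomputable def dl (i : ℕ) (u : ZMod l) : ℂ :=
  (if u = (i : ZMod l) + 1 then 1 else 0) - (if u = -((i : ZMod l) + 1) then 1 else 0)

lemma dl_neg (i : ℕ) (u : ZMod l) : dl i (-u) = - dl i u := by
  have h1 : -u = (i : ZMod l) + 1 ↔ u = -((i : ZMod l) + 1) := neg_eq_iff_eq_neg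
  simp only [dl, neg_inj, h1]
  ring

lemma dl_apply {n i k : ℕ} (hl : l = 2 * n + 1) (hi : i < n) (hk : k < n) :
    dl i ((k : ZMod l) + 1) = if k = i then 1 else 0 := by
  unfold dl
  rw [if_neg (cast_ne_neg hl hk hi), sub_zero]
  by_cases h : k = i
  · simp [h]
  · rw [if_neg h, if_neg]
    intro h2; exact h (cast_inj hl hk hi h2)

/-- coordinate functional -/
noncomputable def cf (i j : ℕ) : (Pr l →₀ ℂ) →ₗ[ℂ] ℂ :=
  Finsupp.lift ℂ ℂ (Pr l) fun p => dl i p.1.1 * dl j p.1.2 - dl j p.1.1 * dl i p.1.2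

lemma K_le_ker (i j : ℕ) : K l ≤ LinearMap.ker (cf i j) := by
  refine Submodule.span_le.2 ?_
  rintro w ⟨p, q, h, rfl⟩
  rw [SetLike.mem_coe, LinearMap.mem_ker, map_add]
  rcases h with h | h <;> simp [cf, h, dl_neg]
  ring

/-- the representative of an index -/
def rep {n : ℕ} (hl : l = 2 * n + 1) (r : RR n) : Pr l :=
  ⟨((r.2.val : ZMod l) + 1, (r.1.val : ZMod l) + 1), by
    intro h
    have h1 : (r.1.val : ZMod l) + 1 = 0 := congrArg Prod.snd h
    have h2 : ((r.1.val + 1 : ℕ) : ZMod l) = 0 := by simpa using h1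
    rw [ZMod.natCast_eq_zero_iff] at h2
    have := Nat.le_of_dvd (by omega) h2
    have := r.1.isLt
    omega⟩

lemma cf_rep {n : ℕ} (hl : l = 2 * n + 1) (r s : RR n) :
    cf s.2.val s.1.val (Finsupp.single (rep hl r) (1 : ℂ)) = if r = s then 1 else 0 := by
  obtain ⟨⟨j, hj⟩, ⟨i, hi⟩⟩ := r
  obtain ⟨⟨j', hj'⟩, ⟨i', hi'⟩⟩ := s
  simp only at hi hi'
  have e : ((⟨⟨j, hj⟩, ⟨i, hi⟩⟩ : RR n) = ⟨⟨j', hj'⟩, ⟨i', hi'⟩⟩) ↔ (i = i' ∧ j = j') := by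
    constructor
    · intro h
      have h1 : j = j' := congrArg (fun x : RR n => x.1.val) h
      have h2 : i = i' := congrArg (fun x : RR n => x.2.val) h
      exact ⟨h2, h1⟩
    · rintro ⟨rfl, rfl⟩; rfl
  simp only [cf, rep, Finsupp.lift_apply, Finsupp.sum_single_index, zero_smul, one_smul, e]
  rw [dl_apply hl (by omega) (by omega), dl_apply hl (by omega) (by omega),
    dl_apply hl (by omega) (by omega), dl_apply hl (by omega) (by omega)]
  by_cases h1 : i = i' <;> by_cases h2 : j = j' <;> simp [h1, h2] <;> omega

lemma indep {n : ℕ} (hl : l = 2 * n + 1) (hp : l.Prime) (hi : Rel l ≤ (Rel l).comap (iV l)) :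
    LinearIndependent ℂ (fun r : RR n => ee hi (rep hl r).1.1 (rep hl r).1.2) := by
  rw [Fintype.linearIndependent_iff]
  intro g hg s
  have h1 : (∑ r, g r • Finsupp.single (rep hl r) (1 : ℂ)) ∈ LinearMap.ker (FF hi) := by
    rw [LinearMap.mem_ker, map_sum, ← hg]
    refine Finset.sum_congr rfl fun r _ => ?_
    rw [map_smul, FF_single, one_smul]
  rw [ker_FF hp] at h1
  have h2 := K_le_ker s.2.val s.1.val h1
  rw [LinearMap.mem_ker, map_sum] at h2
  simpa [map_smul, cf_rep, -Finsupp.smul_single] using h2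

lemma range_eq {n : ℕ} (hl : l = 2 * n + 1) (hp : l.Prime) (hi : Rel l ≤ (Rel l).comap (iV l)) :
    LinearMap.range (FF hi) =
      Submodule.span ℂ (Set.range (fun r : RR n => ee hi (rep hl r).1.1 (rep hl r).1.2)) := by
  apply le_antisymm
  · set N := Submodule.span ℂ (Set.range (fun r : RR n => ee hi (rep hl r).1.1 (rep hl r).1.2)) with hN
    have a0 : ∀ i j : ℕ, i < j → j < n → ee hi ((i : ZMod l) + 1) ((j : ZMod l) + 1) ∈ N := by
      intro i j hij hj
      exact Submodule.subset_span ⟨(⟨⟨j, hj⟩, ⟨i, hij⟩⟩ : RR n), rfl⟩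
    have a1 : ∀ i j : ℕ, i < n → j < n → ee hi ((i : ZMod l) + 1) ((j : ZMod l) + 1) ∈ N := by
      intro i j hi' hj
      rcases lt_trichotomy i j with h | h | h
      · exact a0 i j h hj
      · subst h
        rw [eq_zero_of_neg (ee_h2 hp hi ((i : ZMod l) + 1) ((i : ZMod l) + 1))]
        exact zero_mem _
      · rw [ee_h2 hp]; exact neg_mem (a0 j i h hi')
    have a2 : ∀ u v : ZMod l, ee hi u v ∈ N := by
      intro u v
      have hz : ∀ v, ee hi 0 v = 0 := fun v =>
        eq_zero_of_neg (by simpa using ee_h1 hi 0 v)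
      rcases cover hl u with rfl | ⟨i, hi', hu⟩
      · rw [hz]; exact zero_mem _
      rcases cover hl v with rfl | ⟨j, hj', hv⟩
      · rw [ee_h2 hp, hz, neg_zero]; exact zero_mem _
      have hn := br_neg (ee hi) (ee_h1 hi) (ee_h2 hp hi)
      rcases hu with rfl | rfl <;> rcases hv with rfl | rfl
      · exact a1 i j hi' hj'
      · rw [hn]; exact neg_mem (a1 i j hi' hj')
      · rw [ee_h1]; exact neg_mem (a1 i j hi' hj')
      · rw [ee_h1, hn, neg_neg]; exact a1 i j hi' hj'
    rintro _ ⟨w, rfl⟩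
    induction w using Finsupp.induction_linear with
    | zero => rw [map_zero]; exact zero_mem _
    | add f g hf hg => rw [map_add]; exact add_mem hf hg
    | single p c =>
      rw [FF_single]
      exact Submodule.smul_mem _ _ (a2 _ _)
  · refine Submodule.span_le.2 ?_
    rintro _ ⟨r, rfl⟩
    exact ee_mem hp hi _ _

lemma finrank_FF {n : ℕ} (hl : l = 2 * n + 1) (hp : l.Prime) (hi : Rel l ≤ (Rel l).comap (iV l)) :
    Module.finrank ℂ (LinearMap.range (FF hi)) = n * (n - 1) / 2 := by
  rw [range_eq hl hp hi, finrank_span_eq_card (indep hl hp hi), card_RR]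

end aux
end MW

open MW in
theorem stmt3 (l : ℕ) (hp : l.Prime) (hl : 3 ≤ l)
    (hi : Rel l ≤ (Rel l).comap (iV l)) :
    Module.finrank ℂ
        ↥(S l ⊓ LinearMap.ker
            (Submodule.mapQ (Rel l) (Rel l) (iV l) hi - (LinearMap.id : M l →ₗ[ℂ] M l)))
      = (l - 1) * (l - 3) / 8 ∧
    LinearMap.ker
        ((Finsupp.lift (M l) ℂ {p : ZMod l × ZMod l // p ≠ 0}) fun p =>
          (2 : ℂ)⁻¹ • (xy l p.1.1 p.1.2 +
            Submodule.mapQ (Rel l) (Rel l) (iV l) hi (xy l p.1.1 p.1.2)))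
      = Submodule.span ℂ
          {w : {p : ZMod l × ZMod l // p ≠ 0} →₀ ℂ |
            ∃ p q : {p : ZMod l × ZMod l // p ≠ 0},
              (q.1 = (-p.1.1, p.1.2) ∨ q.1 = (p.1.2, p.1.1)) ∧
              w = Finsupp.single p 1 + Finsupp.single q 1} := by
  refine ⟨?_, ker_FF hp hi⟩
  obtain ⟨n, hn⟩ : ∃ n, l = 2 * n + 1 := by
    rcases hp.eq_two_or_odd' with h | h
    · omega
    · exact h
  rw [S_plus hp hi, finrank_FF hn hp hi]
  have e : (l - 1) * (l - 3) = 4 * (n * (n - 1)) := by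
    rw [show l - 1 = 2 * n by omega, show l - 3 = 2 * (n - 1) by omega]; ring
  omega
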